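/- Let x : [a,s₀] → M be a nonconstant C² solution of (E−V(x)) D/ds ẋ − g(∇V(x),ẋ) ẋ + ½ g(ẋ,ẋ) ∇V(x) = 0 on (a,s₀), with ½(E−V(x)) g(ẋ,ẋ) ≡ c_x > 0, x(s) ∈ V⁻¹((−∞,E)) for s < s₀, and x(s₀) ∈ V⁻¹(E). Then there exist constants 0 < c₁ ≤ c₂ and a neighborhood of s₀ in which c₁ (s₀−s)^{2/3} ≤ E − V(x(s)) ≤ c₂ (s₀−s)^{2/3}; consequently the map t(s) = ∫_a^s √(c_x)/(E−V(x(τ))) dτ is bounded on [a,s₀), and its bound can be chosen uniformly over all such solutions x with c_x bounded by a fixed constant. -/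

import Mathlib

open MeasureTheory Set Matrix Filter Topology

namespace JacobiPaper

noncomputable section

/-- Points/vectors of the ambient space `ℝ^N` in which the manifold `M` is
topologically embedded as an open subset. -/
abbrev Vec (N : ℕ) := Fin N → ℝ

variable {N : ℕ}

/-- The inner product determined by a field of matrices `g` at the point `x`. -/
def gP (g : Vec N → Matrix (Fin N) (Fin N) ℝ) (x v w : Vec N) : ℝ :=
  ∑ i, ∑ j, g x i j * v i * w j

/-- The Euclidean gradient (the differential, as a vector). -/
def euclGrad (V : Vec N → ℝ) (x : Vec N) : Vec N :=
  fun i => fderiv ℝ V x (Pi.single i 1)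

/-- The setting of the paper: a `C³` Riemannian metric `g` on a neighborhood `U` of
the compact sublevel `V⁻¹((-∞,E])`, with `V` of class `C²` there and `E` a regular
value of `V`. -/
structure Setting (N : ℕ) where
  g : Vec N → Matrix (Fin N) (Fin N) ℝ
  V : Vec N → ℝ
  E : ℝ
  U : Set (Vec N)
  hdim : 1 ≤ N
  hU : IsOpen U
  hsub : {x | V x ≤ E} ⊆ U
  hgC : ∀ i j, ContDiffOn ℝ 3 (fun x => g x i j) U
  hgsymm : ∀ x ∈ U, ∀ i j, g x i j = g x j i
  hgpos : ∀ x ∈ U, ∀ v : Vec N, v ≠ 0 → 0 < gP g x v v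
  hVC : ContDiffOn ℝ 2 V U
  hreg : ∀ x, V x = E → euclGrad V x ≠ 0
  hcomp : IsCompact {x : Vec N | V x ≤ E}

namespace Setting

variable (S : Setting N)

/-- The Riemannian inner product `g_x(v,w)`. -/
def prod (x v w : Vec N) : ℝ := gP S.g x v w

/-- The Riemannian norm `‖v‖_x`. -/
def gnorm (x v : Vec N) : ℝ := Real.sqrt (S.prod x v v)

/-- The gradient of `V` with respect to `g`. -/
def grad (x : Vec N) : Vec N := (S.g x)⁻¹ *ᵥ euclGrad S.V x

/-- Christoffel symbols `Γ^k_{ij}` of the Levi-Civita connection of `g`. -/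
def christoffel (x : Vec N) (k i j : Fin N) : ℝ :=
  (1/2) * ∑ l, (S.g x)⁻¹ k l *
    (fderiv ℝ (fun y => S.g y l j) x (Pi.single i 1)
     + fderiv ℝ (fun y => S.g y l i) x (Pi.single j 1)
     - fderiv ℝ (fun y => S.g y i j) x (Pi.single l 1))

/-- Covariant derivative, along the curve `q` with velocity `q'`, of the vector field
`ξ` whose (pointwise) derivative is `ξ'`. -/
def covD (q q' ξ ξ' : ℝ → Vec N) (s : ℝ) : Vec N :=
  fun k => ξ' s k + ∑ i, ∑ j, S.christoffel (q s) k i j * q' s i * ξ s j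

/-- The Riemann curvature tensor `R(u,v)w` of `g` at `x`. -/
def curv (x u v w : Vec N) : Vec N :=
  fun l => ∑ i, ∑ j, ∑ k, u i * v j * w k *
    (fderiv ℝ (fun y => S.christoffel y l j k) x (Pi.single i 1)
     - fderiv ℝ (fun y => S.christoffel y l i k) x (Pi.single j 1)
     + ∑ m, (S.christoffel x l i m * S.christoffel x m j k
             - S.christoffel x l j m * S.christoffel x m i k))

/-- The Hessian operator of `V` with respect to `g`: `ξ ↦ ∇_ξ ∇V`. -/
def hessV (x ξ : Vec N) : Vec N :=
  fun k => ∑ i, ξ i * (fderiv ℝ (fun y => S.grad y k) x (Pi.single i 1)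
    + ∑ j, S.christoffel x k i j * S.grad x j)

/-- The Jacobi-metric geodesic equation (eq. (2.5) of the paper) at the instant `s`,
for a curve `x` with derivative `x'` and second derivative `x''`. -/
def GeoEqAt (x x' x'' : ℝ → Vec N) (s : ℝ) : Prop :=
  ∀ k, (S.E - S.V (x s)) * S.covD x x' x' x'' s k
    - S.prod (x s) (S.grad (x s)) (x' s) * x' s k
    + (1/2) * S.prod (x s) (x' s) (x' s) * S.grad (x s) k = 0

end Setting

/-- `q` is of class `C²` on `I` with first derivative `q'` and second derivative `q''`. -/
def C2OnWith (q q' q'' : ℝ → Vec N) (I : Set ℝ) : Prop :=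
  (∀ t ∈ I, HasDerivWithinAt q (q' t) I t) ∧
  (∀ t ∈ I, HasDerivWithinAt q' (q'' t) I t) ∧
  ContinuousOn q'' I

/-- `x` belongs to the Sobolev space `H¹([a,b],ℝ^N)`: it is absolutely continuous
(primitive of its a.e. derivative) with square-integrable derivative. -/
def H1On (x : ℝ → Vec N) (a b : ℝ) : Prop :=
  ContinuousOn x (Icc a b) ∧
  IntegrableOn (deriv x) (Icc a b) ∧
  IntegrableOn (fun s => ‖deriv x s‖ ^ 2) (Icc a b) ∧
  ∀ t ∈ Icc a b, x t = x a + ∫ s in a..t, deriv x s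

/-- `x` is absolutely continuous on `[a,b]`. -/
def ACOn (x : ℝ → Vec N) (a b : ℝ) : Prop :=
  ContinuousOn x (Icc a b) ∧
  IntegrableOn (deriv x) (Icc a b) ∧
  ∀ t ∈ Icc a b, x t = x a + ∫ s in a..t, deriv x s

namespace Setting

variable (S : Setting N)

/-- The weak (distributional) form (eq. (2.7)) of the Jacobi geodesic equation on `(a,b)`,
tested against all `ξ ∈ C^∞_0((a,b),ℝ^N)`. -/
def WeakGeo (x : ℝ → Vec N) (a b : ℝ) : Prop :=
  ∀ ξ : ℝ → Vec N, ContDiff ℝ (⊤ : ℕ∞) ξ → tsupport ξ ⊆ Ioo a b →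
    (∫ s in a..b,
      ((S.E - S.V (x s)) * S.prod (x s) (deriv x s) (S.covD x (deriv x) ξ (deriv ξ) s)
        - (1/2) * S.prod (x s) (deriv x s) (deriv x s)
            * S.prod (x s) (S.grad (x s)) (ξ s))) = 0

/-- The space `X_Q`. -/
def InXQ (Q : Vec N) (x : ℝ → Vec N) : Prop :=
  H1On x 0 1 ∧ S.V (x 0) = S.E ∧ (∀ s ∈ Ioc (0:ℝ) 1, S.V (x s) < S.E) ∧ x 1 = Q

/-- The Jacobi length functional `L_V`. -/
def LV (x : ℝ → Vec N) : ℝ :=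
  ∫ s in (0:ℝ)..1,
    Real.sqrt ((1/2) * (S.E - S.V (x s)) * S.prod (x s) (deriv x s) (deriv x s))

/-- The distance `d_V(Q)` from `Q` to the boundary of the potential well. -/
def dV (Q : Vec N) : ℝ := sInf {r | ∃ x, S.InXQ Q x ∧ r = S.LV x}

/-- `γ : [0,a] → M` is a `g_*`-geodesic starting at `V⁻¹(E)`, staying in the potential
well for `s > 0`, parameterized by arc length (`½ g(γ̇,γ̇)(E−V(γ)) ≡ 1`). -/
def IsBdryGeo (γ : ℝ → Vec N) (a : ℝ) : Prop :=
  0 < a ∧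
  ContinuousOn γ (Icc 0 a) ∧
  (∀ s ∈ Ioc (0:ℝ) a, ContDiffAt ℝ 2 γ s) ∧
  S.V (γ 0) = S.E ∧
  (∀ s ∈ Ioc (0:ℝ) a, S.V (γ s) < S.E) ∧
  (∀ s ∈ Ioc (0:ℝ) a, S.GeoEqAt γ (deriv γ) (deriv (deriv γ)) s) ∧
  (∀ s ∈ Ioc (0:ℝ) a, (1/2) * S.prod (γ s) (deriv γ s) (deriv γ s) * (S.E - S.V (γ s)) = 1)

/-- The index form `I_{s₁,s₂}(ξ,η)` along `γ`. -/
def idxForm (γ : ℝ → Vec N) (s₁ s₂ : ℝ) (ξ η : ℝ → Vec N) : ℝ :=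
  ∫ u in s₁..s₂,
    ((S.E - S.V (γ u)) *
        (S.prod (γ u) (S.covD γ (deriv γ) ξ (deriv ξ) u) (S.covD γ (deriv γ) η (deriv η) u)
          + S.prod (γ u) (S.curv (γ u) (deriv γ u) (ξ u) (deriv γ u)) (η u))
      - (S.prod (γ u) (S.grad (γ u)) (ξ u)
            * S.prod (γ u) (deriv γ u) (S.covD γ (deriv γ) η (deriv η) u)
          + S.prod (γ u) (deriv γ u) (S.covD γ (deriv γ) ξ (deriv ξ) u)
            * S.prod (γ u) (S.grad (γ u)) (η u)
          + (1/2) * S.prod (γ u) (S.hessV (γ u) (ξ u)) (η u)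
            * S.prod (γ u) (deriv γ u) (deriv γ u)))

/-- Membership in the space `Y_s^W`: absolutely continuous vector fields along `γ|[0,s]`
with finite weighted norm, with `ξ(0) ∈ T_{γ(0)}V⁻¹(E)` and `ξ(s) = W`. -/
def InY (γ : ℝ → Vec N) (s : ℝ) (W : Vec N) (ξ : ℝ → Vec N) : Prop :=
  ACOn ξ 0 s ∧
  IntegrableOn (fun u => (S.E - S.V (γ u)) *
      S.prod (γ u) (S.covD γ (deriv γ) ξ (deriv ξ) u)
        (S.covD γ (deriv γ) ξ (deriv ξ) u)) (Icc 0 s) ∧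
  S.prod (γ 0) (S.grad (γ 0)) (ξ 0) = 0 ∧
  ξ s = W

/-- The weighted squared norm `⟨ξ,ξ⟩_{0,s}`. -/
def wNormSq (γ : ℝ → Vec N) (s : ℝ) (ξ : ℝ → Vec N) : ℝ :=
  ∫ u in (0:ℝ)..s, (S.E - S.V (γ u)) *
    S.prod (γ u) (S.covD γ (deriv γ) ξ (deriv ξ) u) (S.covD γ (deriv γ) ξ (deriv ξ) u)

/-- The Jacobi field equation (eq. (4.9)) at the instant `u`. -/
def JacobiEqAt (γ ξ : ℝ → Vec N) (u : ℝ) : Prop :=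
  ∀ k, - deriv (fun t => (S.E - S.V (γ t)) * S.covD γ (deriv γ) ξ (deriv ξ) t k) u
      + (S.E - S.V (γ u)) * S.curv (γ u) (deriv γ u) (ξ u) (deriv γ u) k
      + deriv (fun t => S.prod (γ t) (S.grad (γ t)) (ξ t) * deriv γ t k) u
      - S.prod (γ u) (deriv γ u) (S.covD γ (deriv γ) ξ (deriv ξ) u) * S.grad (γ u) k
      - (1/2) * S.prod (γ u) (deriv γ u) (deriv γ u) * S.hessV (γ u) (ξ u) k = 0

/-- `ξ` is a Jacobi field along `γ|[0,s]`: of class `C⁰([0,s]) ∩ C²((0,s])` and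
solving the Jacobi equation on `(0,s]`. -/
def IsJacobi (γ ξ : ℝ → Vec N) (s : ℝ) : Prop :=
  ContinuousOn ξ (Icc 0 s) ∧ (∀ u ∈ Ioc (0:ℝ) s, ContDiffAt ℝ 2 ξ u) ∧
  ∀ u ∈ Ioc (0:ℝ) s, S.JacobiEqAt γ ξ u

/-- The boundary condition (eq. (4.10)): the continuous extension at `s = 0` of
`(E−V(γ))Dξ/ds − g(∇V(γ),ξ)γ̇` is parallel to `∇V(γ(0))`. -/
def BdryCond (γ ξ : ℝ → Vec N) : Prop :=
  ∃ c : ℝ, Tendsto (fun u => (fun k => (S.E - S.V (γ u)) * S.covD γ (deriv γ) ξ (deriv ξ) u k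
      - S.prod (γ u) (S.grad (γ u)) (ξ u) * deriv γ u k))
    (nhdsWithin 0 (Ioi 0)) (nhds (c • S.grad (γ 0)))

end Setting

/-- The family `ξ : Fin n → (ℝ → Vec N)` is linearly independent as fields on `I`. -/
def IndepOn {n : ℕ} (I : Set ℝ) (ξ : Fin n → ℝ → Vec N) : Prop :=
  ∀ c : Fin n → ℝ, (∀ u ∈ I, (∑ i, c i • ξ i) u = 0) → c = 0

/-- The index of the quadratic form `B` on the class `C` of vector fields (regarded as
fields on `I`) is at least `n`. -/
def IndexGe {N : ℕ} (B : (ℝ → Vec N) → ℝ) (C : (ℝ → Vec N) → Prop) (I : Set ℝ) (n : ℕ) : Prop :=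
  ∃ ξ : Fin n → ℝ → Vec N, (∀ i, C (ξ i)) ∧ IndepOn I ξ ∧
    ∀ c : Fin n → ℝ, c ≠ 0 → B (∑ i, c i • ξ i) < 0

/-- The index of the quadratic form `B` on the class `C` equals `n`. -/
def IndexEq {N : ℕ} (B : (ℝ → Vec N) → ℝ) (C : (ℝ → Vec N) → Prop) (I : Set ℝ) (n : ℕ) : Prop :=
  IndexGe B C I n ∧ ¬ IndexGe B C I (n+1)

/-- The nullity of a bilinear form `B` on the class `C` is at least `n`. -/
def NullGe {N : ℕ} (B : (ℝ → Vec N) → (ℝ → Vec N) → ℝ) (C : (ℝ → Vec N) → Prop)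
    (I : Set ℝ) (n : ℕ) : Prop :=
  ∃ ξ : Fin n → ℝ → Vec N, (∀ i, C (ξ i)) ∧ IndepOn I ξ ∧
    ∀ i, ∀ η, C η → B (ξ i) η = 0

/-- The nullity of a bilinear form `B` on the class `C` equals `n`. -/
def NullEq {N : ℕ} (B : (ℝ → Vec N) → (ℝ → Vec N) → ℝ) (C : (ℝ → Vec N) → Prop)
    (I : Set ℝ) (n : ℕ) : Prop :=
  NullGe B C I n ∧ ¬ NullGe B C I (n+1)

namespace Setting

variable (S : Setting N)

/-- `ξ` is a (nontrivial candidate) field realizing conjugacy at `γ(s)`: a Jacobi field in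
`Y_s` satisfying the boundary condition (4.10). -/
def ConjField (γ : ℝ → Vec N) (s : ℝ) (ξ : ℝ → Vec N) : Prop :=
  S.InY γ s 0 ξ ∧ S.IsJacobi γ ξ s ∧ S.BdryCond γ ξ

/-- `γ(s)` is conjugate to `V⁻¹(E)` with multiplicity at least `n`. -/
def MultGe (γ : ℝ → Vec N) (s : ℝ) (n : ℕ) : Prop :=
  ∃ ξ : Fin n → ℝ → Vec N, (∀ i, S.ConjField γ s (ξ i)) ∧ IndepOn (Icc 0 s) ξ

/-- `γ(s)` is conjugate to `V⁻¹(E)`. -/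
def IsConj (γ : ℝ → Vec N) (s : ℝ) : Prop := S.MultGe γ s 1

/-- `γ(s)` is conjugate to `V⁻¹(E)` with multiplicity exactly `n`. -/
def Mult (γ : ℝ → Vec N) (s : ℝ) (n : ℕ) : Prop :=
  S.MultGe γ s n ∧ ¬ S.MultGe γ s (n+1)

end Setting

/-- A nonconstant `C²` Jacobi-metric geodesic on `[a,s₀]`, with constant
`½(E−V(x))g(ẋ,ẋ) ≡ cx > 0`, staying in the well for `s < s₀` and reaching the
boundary `V⁻¹(E)` at `s₀`. -/
def ReachesBdry {N : ℕ} (S : Setting N) (a s₀ : ℝ) (x x' x'' : ℝ → Vec N) (cx : ℝ) : Prop :=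
  ContinuousOn x (Icc a s₀) ∧
  (∀ s ∈ Ioo a s₀, HasDerivAt x (x' s) s) ∧
  (∀ s ∈ Ioo a s₀, HasDerivAt x' (x'' s) s) ∧
  ContinuousOn x'' (Ioo a s₀) ∧
  (∃ s ∈ Icc a s₀, ∃ t ∈ Icc a s₀, x s ≠ x t) ∧
  (∀ s ∈ Ioo a s₀, S.GeoEqAt x x' x'' s) ∧
  0 < cx ∧
  (∀ s ∈ Ioo a s₀, (1/2) * (S.E - S.V (x s)) * S.prod (x s) (x' s) (x' s) = cx) ∧
  (∀ s ∈ Ico a s₀, S.V (x s) < S.E) ∧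
  S.V (x s₀) = S.E

/-- A function vanishing at `s₀` with `√f · f'` bounded below grows at most like
`(s₀ - s)^{2/3}` to the left of `s₀`. -/
lemma le_rpow_two_thirds {f f1 : ℝ → ℝ} {b s₀ m : ℝ} (hm : 0 ≤ m)
    (hf : ContinuousOn f (Icc b s₀)) (hpos : ∀ s ∈ Ico b s₀, 0 < f s) (h0 : f s₀ = 0)
    (h1 : ∀ s ∈ Ioo b s₀, HasDerivAt f (f1 s) s)
    (hm1 : ∀ s ∈ Ioo b s₀, -m ≤ √(f s) * f1 s) :
    ∀ s ∈ Ico b s₀, f s ≤ (3 / 2 * m) ^ ((2 : ℝ) / 3) * (s₀ - s) ^ ((2 : ℝ) / 3) := by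
  intro s hs
  have hmono : MonotoneOn (fun s => f s ^ ((3 : ℝ) / 2) + 3 / 2 * m * s) (Icc b s₀) := by
    refine monotoneOn_of_hasDerivWithinAt_nonneg (convex_Icc _ _)
      (f' := fun s => f1 s * (3 / 2) * f s ^ ((3 : ℝ) / 2 - 1) + 3 / 2 * m * 1) ?_ ?_ ?_
    · exact (hf.rpow_const fun _ _ => Or.inr (by norm_num)).add (by fun_prop)
    · intro t ht
      rw [interior_Icc] at ht
      exact (((h1 t ht).rpow_const (Or.inl (hpos t ⟨ht.1.le, ht.2⟩).ne')).add
        ((hasDerivAt_id t).const_mul _)).hasDerivWithinAt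
    · intro t ht
      rw [interior_Icc] at ht
      have := hm1 t ht
      rw [Real.sqrt_eq_rpow] at this
      norm_num at this ⊢
      linarith
  have h := hmono ⟨hs.1, hs.2.le⟩ ⟨hs.1.trans hs.2.le, le_rfl⟩ hs.2.le
  simp only [h0] at h
  rw [Real.zero_rpow (by norm_num)] at h
  have hfs := (hpos s hs).le
  have h' : f s ^ ((3 : ℝ) / 2) ≤ 3 / 2 * m * (s₀ - s) := by linarith
  have h3 := Real.rpow_le_rpow (by positivity) h' (by norm_num : (0 : ℝ) ≤ 2 / 3)
  rw [← Real.rpow_mul hfs, Real.mul_rpow (by positivity) (by linarith [hs.2])] at h3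
  norm_num at h3
  simpa using h3

/-- A function vanishing at `s₀` with `√f · f'` bounded above by a negative constant grows
at least like `(s₀ - s)^{2/3}` to the left of `s₀`. -/
lemma rpow_two_thirds_le {f f1 : ℝ → ℝ} {b s₀ m : ℝ} (hm : 0 ≤ m)
    (hf : ContinuousOn f (Icc b s₀)) (hpos : ∀ s ∈ Ico b s₀, 0 < f s) (h0 : f s₀ = 0)
    (h1 : ∀ s ∈ Ioo b s₀, HasDerivAt f (f1 s) s)
    (hm1 : ∀ s ∈ Ioo b s₀, √(f s) * f1 s ≤ -m) :
    ∀ s ∈ Ico b s₀, (3 / 2 * m) ^ ((2 : ℝ) / 3) * (s₀ - s) ^ ((2 : ℝ) / 3) ≤ f s := by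
  intro s hs
  have hanti : AntitoneOn (fun s => f s ^ ((3 : ℝ) / 2) + 3 / 2 * m * s) (Icc b s₀) := by
    refine antitoneOn_of_hasDerivWithinAt_nonpos (convex_Icc _ _)
      (f' := fun s => f1 s * (3 / 2) * f s ^ ((3 : ℝ) / 2 - 1) + 3 / 2 * m * 1) ?_ ?_ ?_
    · exact (hf.rpow_const fun _ _ => Or.inr (by norm_num)).add (by fun_prop)
    · intro t ht
      rw [interior_Icc] at ht
      exact (((h1 t ht).rpow_const (Or.inl (hpos t ⟨ht.1.le, ht.2⟩).ne')).add
        ((hasDerivAt_id t).const_mul _)).hasDerivWithinAt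
    · intro t ht
      rw [interior_Icc] at ht
      have := hm1 t ht
      rw [Real.sqrt_eq_rpow] at this
      norm_num at this ⊢
      linarith
  have h := hanti ⟨hs.1, hs.2.le⟩ ⟨hs.1.trans hs.2.le, le_rfl⟩ hs.2.le
  simp only [h0] at h
  rw [Real.zero_rpow (by norm_num)] at h
  have hfs := (hpos s hs).le
  have h' : 3 / 2 * m * (s₀ - s) ≤ f s ^ ((3 : ℝ) / 2) := by linarith
  have h3 := Real.rpow_le_rpow (mul_nonneg (by positivity) (by linarith [hs.2])) h'
    (by norm_num : (0 : ℝ) ≤ 2 / 3)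
  rw [← Real.rpow_mul hfs, Real.mul_rpow (by positivity) (by linarith [hs.2])] at h3
  norm_num at h3
  simpa using h3

/-- If `f > 0` vanishes at `s₀`, `f f'^2` is bounded and `(f f')' ≥ c (ρ / f - D)`, then
`√f · f'` is bounded above by a negative constant near `s₀`. -/
lemma exists_sqrt_mul_deriv_le {f f1 f2 : ℝ → ℝ} {a s₀ c A D ρ : ℝ} (ha : a < s₀)
    (hc : 0 < c) (hρ : 0 < ρ)
    (hf : ContinuousOn f (Icc a s₀)) (hpos : ∀ s ∈ Ico a s₀, 0 < f s) (h0 : f s₀ = 0)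
    (h1 : ∀ s ∈ Ioo a s₀, HasDerivAt f (f1 s) s)
    (h2 : ∀ s ∈ Ioo a s₀, HasDerivAt f1 (f2 s) s)
    (hA : ∀ s ∈ Ioo a s₀, f s * f1 s ^ 2 ≤ A * c)
    (hD : ∀ s ∈ Ioo a s₀, c * (ρ / f s - D) ≤ f1 s ^ 2 + f s * f2 s) :
    ∃ b ∈ Ioo a s₀, ∀ s ∈ Ioo b s₀, √(f s) * f1 s ≤ -√(c * ρ) := by
  have hlim : Tendsto f (𝓝[<] s₀) (𝓝 0) := by
    have := (hf s₀ ⟨ha.le, le_rfl⟩).mono Ico_subset_Icc_self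
    rw [ContinuousWithinAt, h0, nhdsWithin_Ico_eq_nhdsLT ha] at this
    exact this
  have hIoo : ∀ᶠ s in 𝓝[<] s₀, s ∈ Ioo a s₀ := Ioo_mem_nhdsLT ha
  have hev : ∀ᶠ s in 𝓝[<] s₀, f s * (2 * |D| + 1) < ρ := by
    have : Tendsto (fun s => f s * (2 * |D| + 1)) (𝓝[<] s₀) (𝓝 (0 * (2 * |D| + 1))) :=
      hlim.mul_const _
    rw [zero_mul] at this
    exact this.eventually_lt_const hρ
  obtain ⟨b₀, hb₀, hb₀'⟩ := (mem_nhdsLT_iff_exists_Ioo_subset' ha).1 (hev.and hIoo)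
  obtain ⟨b, hb⟩ := exists_between (show b₀ < s₀ from hb₀)
  have hsub : ∀ s ∈ Ico b s₀, f s * (2 * |D| + 1) < ρ ∧ s ∈ Ioo a s₀ :=
    fun s hs => hb₀' ⟨hb.1.trans_le hs.1, hs.2⟩
  have hu : ∀ s ∈ Ico b s₀, HasDerivAt (fun s => f s * f1 s) (f1 s * f1 s + f s * f2 s) s :=
    fun s hs => (h1 s (hsub s hs).2).mul (h2 s (hsub s hs).2)
  have hfpos : ∀ s ∈ Ico b s₀, 0 < f s := fun s hs =>
    hpos s ⟨(hsub s hs).2.1.le, hs.2⟩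
  have hu' : ∀ s ∈ Ico b s₀, c * ρ / (2 * f s) ≤ f1 s * f1 s + f s * f2 s := by
    intro s hs
    have hfs := hfpos s hs
    refine le_trans ?_ ((hD s (hsub s hs).2).trans_eq (by ring))
    have h3 : D ≤ ρ / (2 * f s) := by
      rw [le_div_iff₀ (by positivity)]
      nlinarith [(hsub s hs).1, le_abs_self D, abs_nonneg D]
    have h4 : ρ / f s = 2 * (ρ / (2 * f s)) := by field_simp
    rw [h4, mul_div_assoc]
    exact mul_le_mul_of_nonneg_left (by linarith) hc.le
  have hu2lim : Tendsto (fun s => (f s * f1 s) ^ 2) (𝓝[<] s₀) (𝓝 0) := by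
    have hz : Tendsto (fun s => f s * (A * c)) (𝓝[<] s₀) (𝓝 0) := by
      simpa using hlim.mul_const (A * c)
    refine tendsto_of_tendsto_of_tendsto_of_le_of_le' tendsto_const_nhds hz
      (Eventually.of_forall fun s => sq_nonneg _) ?_
    filter_upwards [hIoo] with s hs
    have := mul_le_mul_of_nonneg_left (hA s hs) (hpos s ⟨hs.1.le, hs.2⟩).le
    nlinarith
  have hulim : Tendsto (fun s => f s * f1 s) (𝓝[<] s₀) (𝓝 0) := by
    rw [tendsto_zero_iff_abs_tendsto_zero]
    have := hu2lim.sqrt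
    simpa [Function.comp_def, Real.sqrt_sq_eq_abs] using this
  have hev2 : ∀ s ∈ Ico b s₀, ∀ᶠ t in 𝓝[<] s₀, t ∈ Ico b s₀ ∧ s ≤ t := by
    intro s hs
    filter_upwards [Ioo_mem_nhdsLT hs.2] with t ht
    exact ⟨⟨hs.1.trans ht.1.le, ht.2⟩, ht.1.le⟩
  have humono : MonotoneOn (fun s => f s * f1 s) (Ico b s₀) := by
    refine monotoneOn_of_hasDerivWithinAt_nonneg (convex_Ico _ _)
      (fun s hs => (hu s hs).continuousAt.continuousWithinAt)
      (fun s hs => (hu s (interior_subset hs)).hasDerivWithinAt) fun s hs => ?_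
    have hfs := hfpos s (interior_subset hs)
    exact le_trans (by positivity) (hu' s (interior_subset hs))
  have hunonpos : ∀ s ∈ Ico b s₀, f s * f1 s ≤ 0 := fun s hs =>
    ge_of_tendsto hulim ((hev2 s hs).mono fun t ht => humono hs ht.1 ht.2)
  have hd : ∀ s ∈ Ico b s₀, HasDerivAt (fun s => (f s * f1 s) ^ 2 - c * ρ * f s)
      (2 * (f s * f1 s) * (f1 s * f1 s + f s * f2 s) - c * ρ * f1 s) s := fun s hs => by
    refine (((hu s hs).pow 2).sub ((h1 s (hsub s hs).2).const_mul (c * ρ))).congr_deriv ?_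
    simp
  have hanti : AntitoneOn (fun s => (f s * f1 s) ^ 2 - c * ρ * f s) (Ico b s₀) := by
    refine antitoneOn_of_hasDerivWithinAt_nonpos (convex_Ico _ _)
      (fun s hs => (hd s hs).continuousAt.continuousWithinAt)
      (fun s hs => (hd s (interior_subset hs)).hasDerivWithinAt) fun s hs => ?_
    have hfs := hfpos s (interior_subset hs)
    have h5 := mul_le_mul_of_nonpos_left (hu' s (interior_subset hs))
      (hunonpos s (interior_subset hs))
    have h6 : f s * f1 s * (c * ρ / (2 * f s)) = c * ρ * f1 s / 2 := by field_simp
    linarith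
  have hlim3 : Tendsto (fun s => (f s * f1 s) ^ 2 - c * ρ * f s) (𝓝[<] s₀) (𝓝 0) := by
    simpa using hu2lim.sub (hlim.const_mul (c * ρ))
  refine ⟨b, ⟨(hsub b ⟨le_rfl, hb.2⟩).2.1, hb.2⟩, fun s hs => ?_⟩
  have hs' : s ∈ Ico b s₀ := ⟨hs.1.le, hs.2⟩
  have hfs := hfpos s hs'
  have h7 : 0 ≤ (f s * f1 s) ^ 2 - c * ρ * f s :=
    le_of_tendsto hlim3 ((hev2 s hs').mono fun t ht => hanti hs' ht.1 ht.2)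
  have h8 : c * ρ ≤ (√(f s) * f1 s) ^ 2 := by
    rw [mul_pow, Real.sq_sqrt hfs.le]
    refine le_of_mul_le_mul_left ?_ hfs
    linarith [h7]
  have h9 : f1 s ≤ 0 := nonpos_of_mul_nonpos_right (hunonpos s hs') hfs
  have h10 : √(c * ρ) ≤ |√(f s) * f1 s| := by
    rw [← Real.sqrt_sq_eq_abs]
    exact Real.sqrt_le_sqrt h8
  rw [abs_of_nonpos (mul_nonpos_of_nonneg_of_nonpos (Real.sqrt_nonneg _) h9)] at h10
  linarith

/-- If `f f'^2` is bounded and `(f f')' ≥ c (ρ / f - D)`, then `∫ √c / f` is bounded, with a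
bound depending on `c` only through an upper bound for it. -/
lemma integral_sqrt_div_le {f f1 f2 : ℝ → ℝ} {a s₀ c A D ρ F K : ℝ}
    (hc : 0 < c) (hcK : c ≤ K) (hρ : 0 < ρ) (hA0 : 0 ≤ A) (hD0 : 0 ≤ D)
    (hf : ContinuousOn f (Icc a s₀)) (hpos : ∀ s ∈ Ico a s₀, 0 < f s)
    (hF : ∀ s ∈ Icc a s₀, f s ≤ F)
    (h1 : ∀ s ∈ Ioo a s₀, HasDerivAt f (f1 s) s)
    (h2 : ∀ s ∈ Ioo a s₀, HasDerivAt f1 (f2 s) s)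
    (hA : ∀ s ∈ Ioo a s₀, f s * f1 s ^ 2 ≤ A * c)
    (hD : ∀ s ∈ Ioo a s₀, c * (ρ / f s - D) ≤ f1 s ^ 2 + f s * f2 s) :
    ∀ s ∈ Ico a s₀, ∫ τ in a..s, √c / f τ ≤ (2 * √(F * A) + √K * D * (s₀ - a)) / ρ := by
  intro s hs
  have hF0 : 0 < F := (hpos s hs).trans_le (hF s ⟨hs.1, hs.2.le⟩)
  have hsc : 0 < √c := Real.sqrt_pos.2 hc
  have hsq : √c * √c = c := Real.mul_self_sqrt hc.le
  have hs0a : 0 ≤ s₀ - a := by linarith [hs.1, hs.2]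
  have hBnonneg : 0 ≤ (2 * √(F * A) + √K * D * (s₀ - a)) / ρ := by positivity
  rcases hs.1.eq_or_lt with rfl | has
  · simpa using hBnonneg
  have hcont : ContinuousOn (fun τ => √c / f τ) (Icc a s) :=
    continuousOn_const.div (hf.mono (Icc_subset_Icc_right hs.2.le))
      fun t ht => (hpos t ⟨ht.1, ht.2.trans_lt hs.2⟩).ne'
  set G : ℝ → ℝ := fun t => ∫ τ in a..t, √c / f τ with hG
  have hGcont : ContinuousOn G (Icc a s) := by
    have := intervalIntegral.continuousOn_primitive_interval
      (hcont.integrableOn_Icc (μ := volume) |>.mono_set (uIcc_of_le has.le).subset)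
    rwa [uIcc_of_le has.le] at this
  have hG' : ∀ t ∈ Ioo a s, HasDerivAt G (√c / f t) t := by
    intro t ht
    refine intervalIntegral.integral_hasDerivAt_right ?_ ?_ ?_
    · exact (hcont.mono (Icc_subset_Icc_right ht.2.le)).intervalIntegrable_of_Icc ht.1.le
    · exact (hcont.mono Ioo_subset_Icc_self).stronglyMeasurableAtFilter isOpen_Ioo t ht
    · exact hcont.continuousAt (Icc_mem_nhds ht.1 ht.2)
  have hmem : ∀ t ∈ Ioc a s, t ∈ Ioo a s₀ := fun t ht => ⟨ht.1, ht.2.trans_lt hs.2⟩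
  have hu : ∀ t ∈ Ioc a s, HasDerivAt (fun t => f t * f1 t) (f1 t * f1 t + f t * f2 t) t :=
    fun t ht => (h1 t (hmem t ht)).mul (h2 t (hmem t ht))
  have hmono : MonotoneOn (fun t => f t * f1 t - √c * ρ * G t + c * D * t) (Ioc a s) := by
    refine monotoneOn_of_hasDerivWithinAt_nonneg (convex_Ioc _ _)
      (f' := fun t => (f1 t * f1 t + f t * f2 t) - √c * ρ * (√c / f t) + c * D * 1)
      ?_ (fun t ht => ?_) fun t ht => ?_
    · refine ((ContinuousOn.sub ?_ ?_).add (by fun_prop))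
      · exact fun t ht => (hu t ht).continuousAt.continuousWithinAt
      · exact continuousOn_const.mul (hGcont.mono Ioc_subset_Icc_self)
    · rw [interior_Ioc] at ht
      exact (((hu t ⟨ht.1, ht.2.le⟩).sub ((hG' t ht).const_mul _)).add
        ((hasDerivAt_id t).const_mul _)).hasDerivWithinAt
    · rw [interior_Ioc] at ht
      have h3 := hD t (hmem t ⟨ht.1, ht.2.le⟩)
      have h4 : √c * ρ * (√c / f t) = c * (ρ / f t) := by
        rw [show c * (ρ / f t) = √c * √c * (ρ / f t) by rw [hsq]]; ring
      rw [h4]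
      linarith
  have habs : ∀ t ∈ Ioc a s, |f t * f1 t| ≤ √c * √(F * A) := by
    intro t ht
    have hft := hpos t ⟨ht.1.le, (hmem t ht).2⟩
    have hfF := hF t ⟨ht.1.le, (hmem t ht).2.le⟩
    rw [← Real.sqrt_mul hc.le, ← Real.sqrt_sq_eq_abs]
    refine Real.sqrt_le_sqrt ?_
    calc (f t * f1 t) ^ 2 = f t * (f t * f1 t ^ 2) := by ring
      _ ≤ f t * (A * c) := mul_le_mul_of_nonneg_left (hA t (hmem t ht)) hft.le
      _ ≤ F * (A * c) := mul_le_mul_of_nonneg_right hfF (by positivity)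
      _ = c * (F * A) := by ring
  have hkey : ∀ t ∈ Ioc a s,
      G s - G t ≤ (2 * √(F * A) + √K * D * (s₀ - a)) / ρ := by
    intro t ht
    have h5 := hmono ht ⟨has, le_rfl⟩ ht.2
    simp only at h5
    have h6 := abs_le.1 (habs t ht)
    have h7 := abs_le.1 (habs s ⟨has, le_rfl⟩)
    have h8 : c * D * (s - t) ≤ c * D * (s₀ - a) :=
      mul_le_mul_of_nonneg_left (by linarith [ht.1, hs.2]) (by positivity)
    have h9 : √c * (ρ * (G s - G t)) ≤ √c * (2 * √(F * A) + √c * D * (s₀ - a)) := by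
      have : √c * (√c * D * (s₀ - a)) = c * D * (s₀ - a) := by
        rw [show c * D * (s₀ - a) = √c * √c * D * (s₀ - a) by rw [hsq]]; ring
      rw [mul_add, this]
      linarith
    have h10 := le_of_mul_le_mul_left h9 hsc
    have h11 : √c * D * (s₀ - a) ≤ √K * D * (s₀ - a) := by gcongr
    rw [le_div_iff₀ hρ]
    linarith
  have hGa : Tendsto G (𝓝[>] a) (𝓝 0) := by
    have := (hGcont a ⟨le_rfl, has.le⟩).mono Ioc_subset_Icc_self
    rw [ContinuousWithinAt, nhdsWithin_Ioc_eq_nhdsGT has] at this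
    simpa [hG] using this
  have hlim : Tendsto (fun t => G s - G t) (𝓝[>] a) (𝓝 (G s)) := by
    simpa using hGa.const_sub (G s)
  exact le_of_tendsto hlim (mem_of_superset (Ioc_mem_nhdsGT has) hkey)

namespace Setting

variable (S : Setting N)

lemma prod_eq_dotProduct {x : Vec N} (hx : x ∈ S.U) (v w : Vec N) :
    S.prod x v w = (S.g x *ᵥ v) ⬝ᵥ w := by
  simp only [prod, gP, dotProduct, mulVec, Finset.sum_mul]
  rw [Finset.sum_comm]
  refine Finset.sum_congr rfl fun j _ => Finset.sum_congr rfl fun i _ => ?_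
  rw [S.hgsymm x hx]

lemma det_ne_zero {x : Vec N} (hx : x ∈ S.U) : (S.g x).det ≠ 0 := by
  intro h
  obtain ⟨v, hv, hv0⟩ := Matrix.exists_mulVec_eq_zero_iff.2 h
  have h1 : 0 < S.prod x v v := S.hgpos x hx v hv
  rw [S.prod_eq_dotProduct hx, hv0, zero_dotProduct] at h1
  exact h1.false

lemma g_mulVec_grad {x : Vec N} (hx : x ∈ S.U) : S.g x *ᵥ S.grad x = euclGrad S.V x := by
  rw [grad, mulVec_mulVec, mul_nonsing_inv _ (isUnit_iff_ne_zero.2 (S.det_ne_zero hx)),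
    one_mulVec]

lemma prod_grad {x : Vec N} (hx : x ∈ S.U) (v : Vec N) :
    S.prod x (S.grad x) v = euclGrad S.V x ⬝ᵥ v := by
  rw [S.prod_eq_dotProduct hx, S.g_mulVec_grad hx]

lemma prod_self_nonneg {x : Vec N} (hx : x ∈ S.U) (v : Vec N) : 0 ≤ S.prod x v v := by
  rcases eq_or_ne v 0 with rfl | hv
  · simp [prod, gP]
  · exact (S.hgpos x hx v hv).le

lemma prod_grad_self_pos {x : Vec N} (hx : x ∈ S.U) (h : euclGrad S.V x ≠ 0) :
    0 < S.prod x (S.grad x) (S.grad x) := by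
  refine S.hgpos x hx _ fun h0 => h ?_
  rw [← S.g_mulVec_grad hx, h0, mulVec_zero]

lemma continuousOn_inv_apply (i j : Fin N) : ContinuousOn (fun x => (S.g x)⁻¹ i j) S.U := by
  have hg : ContinuousOn S.g S.U :=
    continuousOn_pi.2 fun i => continuousOn_pi.2 fun j => (S.hgC i j).continuousOn
  intro x hx
  have h : ContinuousAt (fun A : Matrix (Fin N) (Fin N) ℝ => A⁻¹) (S.g x) := by
    refine continuousAt_matrix_inv _ ?_
    rw [Ring.inverse_eq_inv']
    exact continuousAt_inv₀ (S.det_ne_zero hx)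
  have h2 := h.comp_continuousWithinAt (hg x hx)
  exact (continuous_apply_apply i j).continuousAt.comp_continuousWithinAt h2

lemma continuousOn_christoffel (k i j : Fin N) :
    ContinuousOn (fun x => S.christoffel x k i j) S.U := by
  have hd : ∀ (i j : Fin N) (v : Vec N),
      ContinuousOn (fun x => fderiv ℝ (fun y => S.g y i j) x v) S.U := fun i j v =>
    ((S.hgC i j).continuousOn_fderiv_of_isOpen S.hU (by norm_num)).clm_apply continuousOn_const
  unfold christoffel
  exact continuousOn_const.mul (continuousOn_finsetSum _ fun l _ =>
    (S.continuousOn_inv_apply k l).mul (((hd _ _ _).add (hd _ _ _)).sub (hd _ _ _)))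

lemma continuousOn_fderiv_V : ContinuousOn (fderiv ℝ S.V) S.U :=
  S.hVC.continuousOn_fderiv_of_isOpen S.hU (by norm_num)

lemma contDiffOn_fderiv_V : ContDiffOn ℝ 1 (fderiv ℝ S.V) S.U :=
  S.hVC.fderiv_of_isOpen S.hU (by norm_num)

lemma continuousOn_euclGrad : ContinuousOn (euclGrad S.V) S.U :=
  continuousOn_pi.2 fun _ => S.continuousOn_fderiv_V.clm_apply continuousOn_const

lemma fderiv_V_apply (x v : Vec N) : fderiv ℝ S.V x v = euclGrad S.V x ⬝ᵥ v := by
  have := LinearMap.pi_apply_eq_sum_univ (fderiv ℝ S.V x).toLinearMap v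
  simp only [ContinuousLinearMap.coe_coe] at this
  rw [this]
  simp only [euclGrad, dotProduct, smul_eq_mul]
  refine Finset.sum_congr rfl fun i _ => ?_
  rw [mul_comm]
  congr 2
  ext j
  simp [Pi.single_apply, eq_comm]

/-- The covariant Hessian of `V` as a quadratic form. -/
def hessQuad (x v : Vec N) : ℝ :=
  fderiv ℝ (fderiv ℝ S.V) x v v
    - ∑ k, euclGrad S.V x k * ∑ i, ∑ j, S.christoffel x k i j * v i * v j

lemma continuousOn_prod_self :
    ContinuousOn (fun p : Vec N × Vec N => S.prod p.1 p.2 p.2) (S.U ×ˢ univ) := by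
  unfold prod gP
  refine continuousOn_finsetSum _ fun i _ => continuousOn_finsetSum _ fun j _ => ?_
  exact (((S.hgC i j).continuousOn.comp continuousOn_fst fun p hp => hp.1).mul
    (by fun_prop)).mul (by fun_prop)

lemma continuousOn_hessQuad :
    ContinuousOn (fun p : Vec N × Vec N => S.hessQuad p.1 p.2) (S.U ×ˢ univ) := by
  have hfst : ∀ {Y : Type} [TopologicalSpace Y] {h : Vec N → Y}, ContinuousOn h S.U →
      ContinuousOn (fun p : Vec N × Vec N => h p.1) (S.U ×ˢ univ) :=
    fun hh => hh.comp continuousOn_fst fun p hp => hp.1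
  unfold hessQuad
  refine ContinuousOn.sub ?_ (continuousOn_finsetSum _ fun k _ => ?_)
  · exact ((hfst (S.contDiffOn_fderiv_V.continuousOn_fderiv_of_isOpen S.hU
      le_rfl)).clm_apply continuousOn_snd).clm_apply continuousOn_snd
  · refine (hfst (continuousOn_pi.1 S.continuousOn_euclGrad k)).mul ?_
    refine continuousOn_finsetSum _ fun i _ => continuousOn_finsetSum _ fun j _ => ?_
    exact ((hfst (S.continuousOn_christoffel k i j)).mul (by fun_prop)).mul (by fun_prop)

lemma prod_smul_self (x : Vec N) (t : ℝ) (v : Vec N) :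
    S.prod x (t • v) (t • v) = t ^ 2 * S.prod x v v := by
  simp only [prod, gP, Pi.smul_apply, smul_eq_mul, Finset.mul_sum]
  refine Finset.sum_congr rfl fun i _ => Finset.sum_congr rfl fun j _ => ?_
  ring

lemma hessQuad_smul (x : Vec N) (t : ℝ) (v : Vec N) :
    S.hessQuad x (t • v) = t ^ 2 * S.hessQuad x v := by
  simp only [hessQuad, map_smul, _root_.smul_apply, Pi.smul_apply, smul_eq_mul,
    mul_sub, Finset.mul_sum]
  congr 1
  · ring
  · refine Finset.sum_congr rfl fun k _ => Finset.sum_congr rfl fun i _ =>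
      Finset.sum_congr rfl fun j _ => ?_
    ring

/-- A continuous family of functions homogeneous of degree two is dominated by the metric,
uniformly over the compact sublevel of `V`. -/
lemma exists_abs_le_prod {F : Vec N → Vec N → ℝ}
    (hF : ContinuousOn (fun p : Vec N × Vec N => F p.1 p.2) (S.U ×ˢ univ))
    (hsmul : ∀ x (t : ℝ) v, F x (t • v) = t ^ 2 * F x v) :
    ∃ C, 0 ≤ C ∧ ∀ x, S.V x ≤ S.E → ∀ v, |F x v| ≤ C * S.prod x v v := by
  set T : Set (Vec N × Vec N) := {x | S.V x ≤ S.E} ×ˢ Metric.sphere (0 : Vec N) 1 with hT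
  have hTc : IsCompact T := S.hcomp.prod (isCompact_sphere _ _)
  have hTU : T ⊆ S.U ×ˢ univ := prod_mono S.hsub (subset_univ _)
  have hpos : ∀ p ∈ T, 0 < S.prod p.1 p.2 p.2 := fun p hp =>
    S.hgpos _ (hTU hp).1 _ (ne_zero_of_mem_unit_sphere ⟨p.2, hp.2⟩)
  have hcont : ContinuousOn (fun p : Vec N × Vec N => F p.1 p.2 / S.prod p.1 p.2 p.2) T :=
    (hF.mono hTU).div (S.continuousOn_prod_self.mono hTU) fun p hp => (hpos p hp).ne'
  obtain ⟨C, hC⟩ := hTc.exists_bound_of_continuousOn hcont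
  refine ⟨max C 0, le_max_right _ _, fun x hx v => ?_⟩
  rcases eq_or_ne v 0 with rfl | hv
  · have h1 : F x 0 = 0 := by simpa using hsmul x 0 0
    have h2 : S.prod x 0 0 = 0 := by simpa using S.prod_smul_self x 0 0
    simp [h1, h2]
  · have hn : 0 < ‖v‖ := norm_pos_iff.2 hv
    set w := ‖v‖⁻¹ • v with hw
    have hvw : v = ‖v‖ • w := by rw [hw, smul_inv_smul₀ hn.ne']
    have hwT : (x, w) ∈ T := ⟨hx, by simp [hw, norm_smul, hn.ne']⟩
    have h1 := hC _ hwT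
    have h2 := hpos _ hwT
    rw [Real.norm_eq_abs, abs_div, abs_of_pos h2, div_le_iff₀ h2] at h1
    simp only at h1 h2
    rw [hvw, hsmul, S.prod_smul_self, abs_mul, abs_of_nonneg (sq_nonneg ‖v‖)]
    calc ‖v‖ ^ 2 * |F x w| ≤ ‖v‖ ^ 2 * (max C 0 * S.prod x w w) := by
          gcongr
          exact h1.trans (mul_le_mul_of_nonneg_right (le_max_left _ _) h2.le)
      _ = _ := by ring

lemma exists_sq_fderiv_le :
    ∃ C, 0 ≤ C ∧ ∀ x, S.V x ≤ S.E → ∀ v, (fderiv ℝ S.V x v) ^ 2 ≤ C * S.prod x v v := by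
  obtain ⟨C, hC0, hC⟩ := S.exists_abs_le_prod (F := fun x v => (fderiv ℝ S.V x v) ^ 2)
    (((S.continuousOn_fderiv_V.comp continuousOn_fst fun p hp => hp.1).clm_apply
      continuousOn_snd).pow 2)
    (fun x t v => by simp [mul_pow])
  exact ⟨C, hC0, fun x hx v => (le_abs_self _).trans (hC x hx v)⟩

/-- Since `∇V` does not vanish on `V⁻¹(E)`, the sum `g(∇V,∇V) + (E - V)` is bounded away
from zero on the sublevel. -/
lemma exists_le_prod_grad :
    ∃ ρ > 0, ∀ x, S.V x ≤ S.E → ρ - (S.E - S.V x) ≤ S.prod x (S.grad x) (S.grad x) := by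
  have hgrad : ContinuousOn S.grad S.U := by
    refine continuousOn_pi.2 fun i => ?_
    simp only [grad, mulVec, dotProduct]
    exact continuousOn_finsetSum _ fun j _ =>
      (S.continuousOn_inv_apply i j).mul (continuousOn_pi.1 S.continuousOn_euclGrad j)
  have hcont : ContinuousOn
      (fun x => S.prod x (S.grad x) (S.grad x) + (S.E - S.V x)) {x | S.V x ≤ S.E} :=
    ((S.continuousOn_prod_self.comp (continuousOn_id.prodMk hgrad) fun x hx =>
      ⟨hx, mem_univ _⟩).add (continuousOn_const.sub S.hVC.continuousOn)).mono S.hsub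
  have hpos : ∀ x ∈ {x | S.V x ≤ S.E},
      0 < S.prod x (S.grad x) (S.grad x) + (S.E - S.V x) := by
    intro x hx
    have hxU := S.hsub hx
    rcases (show S.V x ≤ S.E from hx).eq_or_lt with h | h
    · linarith [S.prod_grad_self_pos hxU (S.hreg x h)]
    · linarith [S.prod_self_nonneg hxU (S.grad x)]
  obtain ⟨ρ, hρ, h⟩ := S.hcomp.exists_forall_le' hcont hpos
  exact ⟨ρ, hρ, fun x hx => by linarith [h x hx]⟩

lemma exists_sub_le : ∃ F, ∀ x, S.V x ≤ S.E → S.E - S.V x ≤ F := by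
  obtain ⟨C, hC⟩ := S.hcomp.exists_bound_of_continuousOn (f := fun x => S.E - S.V x)
    ((continuousOn_const.sub S.hVC.continuousOn).mono S.hsub)
  exact ⟨C, fun x hx => (le_abs_self _).trans (hC x hx)⟩

/-- Contracting the geodesic equation with the differential of `V`. -/
lemma GeoEqAt.fderiv_apply {S : Setting N} {x x' x'' : ℝ → Vec N} {s : ℝ}
    (h : S.GeoEqAt x x' x'' s) (hx : x s ∈ S.U) :
    (S.E - S.V (x s)) * (fderiv ℝ (fderiv ℝ S.V) (x s) (x' s) (x' s)
        + fderiv ℝ S.V (x s) (x'' s))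
      = (S.E - S.V (x s)) * S.hessQuad (x s) (x' s) + (fderiv ℝ S.V (x s) (x' s)) ^ 2
        - (1 / 2) * S.prod (x s) (x' s) (x' s) * S.prod (x s) (S.grad (x s)) (S.grad (x s)) := by
  have h1 : ∑ k, euclGrad S.V (x s) k * ((S.E - S.V (x s)) * S.covD x x' x' x'' s k
    - S.prod (x s) (S.grad (x s)) (x' s) * x' s k
    + (1/2) * S.prod (x s) (x' s) (x' s) * S.grad (x s) k) = 0 :=
    Finset.sum_eq_zero fun k _ => by rw [h k, mul_zero]
  have h2 : ∑ k, euclGrad S.V (x s) k * S.covD x x' x' x'' s k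
      = fderiv ℝ S.V (x s) (x'' s)
        + (fderiv ℝ (fderiv ℝ S.V) (x s) (x' s) (x' s) - S.hessQuad (x s) (x' s)) := by
    rw [fderiv_V_apply, hessQuad, sub_sub_cancel, dotProduct, ← Finset.sum_add_distrib]
    simp only [covD, mul_add]
  have h3 : ∀ α β γ : ℝ, ∀ u v w p : Vec N,
      ∑ k, p k * (α * u k - β * v k + γ * w k)
        = α * ∑ k, p k * u k - β * ∑ k, p k * v k + γ * ∑ k, p k * w k := by
    intro α β γ u v w p
    simp only [Finset.mul_sum, ← Finset.sum_sub_distrib, ← Finset.sum_add_distrib]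
    exact Finset.sum_congr rfl fun k _ => by ring
  rw [h3, h2] at h1
  rw [S.prod_grad hx, ← S.fderiv_V_apply] at h1
  rw [S.prod_grad hx (S.grad (x s))]
  have h4 : ∑ k, euclGrad S.V (x s) k * x' s k = fderiv ℝ S.V (x s) (x' s) :=
    (S.fderiv_V_apply _ _).symm
  rw [h4] at h1
  simp only [dotProduct]
  linarith

/-- The analytic content of the geodesic equation for `f = E - V ∘ x`: differentiability, the
bound on `f f'^2` and the lower bound for `(f f')'`, with constants depending on the setting
only. -/
lemma exists_energy_bounds :
    ∃ A D ρ F : ℝ, 0 ≤ A ∧ 0 ≤ D ∧ 0 < ρ ∧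
      ∀ (a s₀ : ℝ) (x x' x'' : ℝ → Vec N) (cx : ℝ), ReachesBdry S a s₀ x x' x'' cx →
        ∃ f1 f2 : ℝ → ℝ,
          ContinuousOn (fun s => S.E - S.V (x s)) (Icc a s₀) ∧
          (∀ s ∈ Icc a s₀, S.E - S.V (x s) ≤ F) ∧
          (∀ s ∈ Ioo a s₀, HasDerivAt (fun s => S.E - S.V (x s)) (f1 s) s) ∧
          (∀ s ∈ Ioo a s₀, HasDerivAt f1 (f2 s) s) ∧
          (∀ s ∈ Ioo a s₀, (S.E - S.V (x s)) * f1 s ^ 2 ≤ A * cx) ∧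
          (∀ s ∈ Ioo a s₀, cx * (ρ / (S.E - S.V (x s)) - D)
            ≤ f1 s ^ 2 + (S.E - S.V (x s)) * f2 s) := by
  obtain ⟨C₁, hC₁, h₁⟩ := S.exists_sq_fderiv_le
  obtain ⟨C₂, hC₂, h₂⟩ := S.exists_abs_le_prod S.continuousOn_hessQuad S.hessQuad_smul
  obtain ⟨ρ, hρ, h₃⟩ := S.exists_le_prod_grad
  obtain ⟨F, hF⟩ := S.exists_sub_le
  refine ⟨2 * C₁, 2 * C₂ + 1, ρ, F, by positivity, by positivity, hρ, ?_⟩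
  rintro a s₀ x x' x'' cx ⟨hx, hx', hx'', -, -, hgeo, hcx, hen, hlt, hend⟩
  have hle : ∀ s ∈ Icc a s₀, S.V (x s) ≤ S.E := fun s hs => by
    rcases hs.2.eq_or_lt with rfl | h
    · exact hend.le
    · exact (hlt s ⟨hs.1, h⟩).le
  have hU : ∀ s ∈ Icc a s₀, x s ∈ S.U := fun s hs => S.hsub (hle s hs)
  have hsub : ∀ s ∈ Ioo a s₀, s ∈ Icc a s₀ := fun s hs => Ioo_subset_Icc_self hs
  have hpos : ∀ s ∈ Ioo a s₀, 0 < S.E - S.V (x s) := fun s hs =>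
    sub_pos.2 (hlt s ⟨hs.1.le, hs.2⟩)
  refine ⟨fun s => -(fderiv ℝ S.V (x s) (x' s)),
    fun s => -(fderiv ℝ (fderiv ℝ S.V) (x s) (x' s) (x' s) + fderiv ℝ S.V (x s) (x'' s)),
    continuousOn_const.sub (S.hVC.continuousOn.comp hx hU), fun s hs => hF _ (hle s hs),
    fun s hs => ?_, fun s hs => ?_, fun s hs => ?_, fun s hs => ?_⟩
  · have hV : DifferentiableAt ℝ S.V (x s) :=
      (S.hVC.differentiableOn (by norm_num)).differentiableAt (S.hU.mem_nhds (hU s (hsub s hs)))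
    exact (hV.hasFDerivAt.comp_hasDerivAt s (hx' s hs)).const_sub S.E
  · have hV : DifferentiableAt ℝ (fderiv ℝ S.V) (x s) :=
      (S.contDiffOn_fderiv_V.differentiableOn (by norm_num)).differentiableAt
        (S.hU.mem_nhds (hU s (hsub s hs)))
    exact ((hV.hasFDerivAt.comp_hasDerivAt s (hx' s hs)).clm_apply (hx'' s hs)).neg
  · have h := mul_le_mul_of_nonneg_left (h₁ _ (hle s (hsub s hs)) (x' s)) (hpos s hs).le
    rw [neg_sq]
    linear_combination h + 2 * C₁ * hen s hs
  · have hf := hpos s hs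
    have hxs := hle s (hsub s hs)
    have hg : (1 / 2) * S.prod (x s) (x' s) (x' s) = cx / (S.E - S.V (x s)) := by
      rw [eq_div_iff hf.ne', ← hen s hs]; ring
    have h := (hgeo s hs).fderiv_apply (hU s (hsub s hs))
    rw [hg] at h
    have hQ := mul_le_mul_of_nonneg_left ((le_abs_self _).trans (h₂ _ hxs (x' s))) hf.le
    have hQ' : (S.E - S.V (x s)) * S.hessQuad (x s) (x' s) ≤ 2 * C₂ * cx := by
      linear_combination hQ + 2 * C₂ * hen s hs
    have hW := mul_le_mul_of_nonneg_left (h₃ _ hxs) (div_pos hcx hf).le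
    have hW' : cx / (S.E - S.V (x s)) * (ρ - (S.E - S.V (x s)))
        = cx * (ρ / (S.E - S.V (x s))) - cx := by field_simp
    rw [neg_sq, mul_neg, h]
    linarith

end Setting

/-- **Remark 2.4**: near the boundary, `E − V(x(s))` behaves like `(s₀−s)^{2/3}`; hence
the Maupertuis time change `t(s)` is bounded, uniformly over all such geodesics whose
energy constant is bounded by a fixed constant. -/
theorem boundary_asymptotics {N : ℕ} (S : Setting N) :
    (∀ (a s₀ : ℝ), a < s₀ → ∀ (x x' x'' : ℝ → Vec N) (cx : ℝ),
      ReachesBdry S a s₀ x x' x'' cx →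
      (∃ c₁ c₂ : ℝ, 0 < c₁ ∧ c₁ ≤ c₂ ∧ ∃ δ > (0:ℝ), ∀ s ∈ Ico (s₀ - δ) s₀, a ≤ s →
          c₁ * (s₀ - s) ^ ((2:ℝ)/3) ≤ S.E - S.V (x s) ∧
          S.E - S.V (x s) ≤ c₂ * (s₀ - s) ^ ((2:ℝ)/3)) ∧
      (∃ B : ℝ, ∀ s ∈ Ico a s₀,
        (∫ τ in a..s, Real.sqrt cx / (S.E - S.V (x τ))) ≤ B)) ∧
    (∀ K > (0:ℝ), ∀ (a s₀ : ℝ), a < s₀ → ∃ B : ℝ,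
      ∀ (x x' x'' : ℝ → Vec N) (cx : ℝ),
        ReachesBdry S a s₀ x x' x'' cx → cx ≤ K →
        ∀ s ∈ Ico a s₀,
          (∫ τ in a..s, Real.sqrt cx / (S.E - S.V (x τ))) ≤ B) := by
  obtain ⟨A, D, ρ, F, hA0, hD0, hρ, H⟩ := S.exists_energy_bounds
  have htime : ∀ K : ℝ, ∀ (a s₀ : ℝ), ∃ B : ℝ,
      ∀ (x x' x'' : ℝ → Vec N) (cx : ℝ),
        ReachesBdry S a s₀ x x' x'' cx → cx ≤ K →
        ∀ s ∈ Ico a s₀, (∫ τ in a..s, Real.sqrt cx / (S.E - S.V (x τ))) ≤ B := by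
    refine fun K a s₀ => ⟨(2 * √(F * A) + √K * D * (s₀ - a)) / ρ, fun x x' x'' cx hR hK => ?_⟩
    obtain ⟨f1, f2, hf, hF, h1, h2, hA, hD⟩ := H a s₀ x x' x'' cx hR
    obtain ⟨-, -, -, -, -, -, hcx, -, hlt, -⟩ := hR
    exact integral_sqrt_div_le hcx hK hρ hA0 hD0 hf (fun s hs => sub_pos.2 (hlt s hs)) hF
      h1 h2 hA hD
  refine ⟨fun a s₀ ha x x' x'' cx hR => ⟨?_, ?_⟩, fun K _ a s₀ _ => htime K a s₀⟩
  · obtain ⟨f1, f2, hf, hF, h1, h2, hA, hD⟩ := H a s₀ x x' x'' cx hR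
    obtain ⟨-, -, -, -, -, -, hcx, -, hlt, hend⟩ := hR
    have hpos : ∀ s ∈ Ico a s₀, 0 < S.E - S.V (x s) := fun s hs => sub_pos.2 (hlt s hs)
    have h0 : S.E - S.V (x s₀) = 0 := sub_eq_zero.2 hend.symm
    obtain ⟨b, hb, hneg⟩ := exists_sqrt_mul_deriv_le ha hcx hρ hf hpos h0 h1 h2 hA hD
    have hIoo : ∀ s ∈ Ioo b s₀, s ∈ Ioo a s₀ := fun s hs => ⟨hb.1.trans hs.1, hs.2⟩
    have hf' := hf.mono (Icc_subset_Icc_left hb.1.le)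
    have hpos' : ∀ s ∈ Ico b s₀, 0 < S.E - S.V (x s) := fun s hs =>
      hpos s ⟨hb.1.le.trans hs.1, hs.2⟩
    have hlower := rpow_two_thirds_le (Real.sqrt_nonneg (cx * ρ)) hf' hpos' h0
      (fun s hs => h1 s (hIoo s hs)) hneg
    have hupper := le_rpow_two_thirds (Real.sqrt_nonneg (A * cx)) hf' hpos' h0
      (fun s hs => h1 s (hIoo s hs)) fun s hs => by
        refine neg_le_of_abs_le ?_
        rw [← Real.sqrt_sq_eq_abs, mul_pow, Real.sq_sqrt (hpos s ⟨(hIoo s hs).1.le, hs.2⟩).le]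
        exact Real.sqrt_le_sqrt (hA s (hIoo s hs))
    have hbs : 0 < s₀ - b := sub_pos.2 hb.2
    have hc₁ : 0 < (3 / 2 * √(cx * ρ)) ^ ((2 : ℝ) / 3) := by positivity
    refine ⟨_, (3 / 2 * √(A * cx)) ^ ((2 : ℝ) / 3), hc₁, ?_, s₀ - b, hbs, fun s hs _ => ?_⟩
    · exact le_of_mul_le_mul_right
        ((hlower b ⟨le_rfl, hb.2⟩).trans (hupper b ⟨le_rfl, hb.2⟩))
        (Real.rpow_pos_of_pos hbs _)
    · rw [sub_sub_cancel] at hs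
      exact ⟨hlower s hs, hupper s hs⟩
  · obtain ⟨B, hB⟩ := htime cx a s₀
    exact ⟨B, hB x x' x'' cx hR le_rfl⟩

end
end JacobiPaper
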